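/- Let a ∈ ℂ be such that a − 1/2 is not a nonnegative integer (i.e. a ∉ {1/2, 3/2, 5/2, …}). Then the functions U_a^+ and U_a^− are linearly independent over ℂ: if c₁, c₂ ∈ ℂ satisfy c₁·U_a^+(z) + c₂·U_a^−(z) = 0 for all z ∈ ℂ, then c₁ = c₂ = 0. -/

import Mathlib

/-- The parabolic cylinder function U_a^± : the contour integral
exp(−z²/4)·∫_{ℝ ± i} exp(z·t − t²/2)·t^{a−1/2} dt along the horizontal line ℝ + σ·i
(σ = 1 for U_a^+ and σ = −1 for U_a^−), the power taken with the principal branch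
of the logarithm. -/
noncomputable def Upc (σ : ℝ) (a z : ℂ) : ℂ :=
  Complex.exp (-z^2/4) *
    ∫ t : ℝ, Complex.exp (z * (t + σ * Complex.I) - (t + σ * Complex.I)^2/2) *
      Complex.exp ((a - 1/2) * Complex.log (t + σ * Complex.I))

/-!
Write `s = a - 1 / 2` and let `P s z` be the integral of `w ^ s * exp (z * w - w ^ 2 / 2)` over
`Im w = σ > 0`, so that `∂P s / ∂z = P (s + 1)`. The reflection `w ↦ -w` turns the integral over
`Im w = -σ` into `exp (-(π * I * s)) * P s (-z)`, so a linear relation between the two functions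
forces `(c₁ + d) * P s 0 = 0` and `(c₁ - d) * P (s + 1) 0 = 0` with `d = c₂ * exp (-(π * I * s))`.

If `Re s < 0`, writing `w ^ s` as a Gamma integral and integrating over the line first shows that
`P s 0` is a nonzero multiple of `Γ (-s / 2) / Γ (-s)`. Integrating the derivative of the integrand
along the line gives `P (s + 1) z = z * P s z + s * P (s - 1) z`, which at `z = 0` propagates
`P s 0 ≠ 0` to every `s` that is not an odd positive integer.
-/

open Complex Filter MeasureTheory Set Topology
open scoped Real

theorem eq_zero_of_mul_add_mul_comp_neg_eventuallyEq_zero {𝕜 : Type*}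
    [NontriviallyNormedField 𝕜] [CharZero 𝕜] {f : 𝕜 → 𝕜} {f' c d : 𝕜}
    (hf : HasDerivAt f f' 0) (hf0 : f 0 ≠ 0) (hf' : f' ≠ 0)
    (h : (fun z => c * f z + d * f (-z)) =ᶠ[𝓝 0] 0) : c = 0 ∧ d = 0 := by
  have hvalue : (c + d) * f 0 = 0 := by
    simpa [add_mul] using h.eq_of_nhds
  have hslope : (c - d) * f' = 0 := by
    have hreflect : HasDerivAt (fun z => f (-z)) (f' * -1) 0 :=
      HasDerivAt.comp 0 (by rwa [neg_zero]) (hasDerivAt_neg 0)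
    have hderiv := (hf.const_mul c).add (hreflect.const_mul d)
    have hzero := hderiv.unique ((hasDerivAt_const _ _).congr_of_eventuallyEq h)
    linear_combination hzero
  have hsum := (mul_eq_zero.1 hvalue).resolve_right hf0
  have hsub := (mul_eq_zero.1 hslope).resolve_right hf'
  exact ⟨by linear_combination (hsum + hsub) / 2, by linear_combination (hsum - hsub) / 2⟩

theorem hasDerivAt_integral_mul_cexp {α : Type*} [MeasurableSpace α] {μ : Measure α}
    {f g : α → ℂ} {z₀ : ℂ} {ε : ℝ} (hε : 0 < ε) (hf : AEStronglyMeasurable f μ)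
    (hg : AEStronglyMeasurable g μ)
    (hfg : Integrable (fun x => f x * exp (z₀ * g x) * Real.exp (ε * ‖g x‖)) μ) :
    HasDerivAt (fun z => ∫ x, f x * exp (z * g x) ∂μ)
      (∫ x, f x * (exp (z₀ * g x) * g x) ∂μ) z₀ := by
  have hmeas (z : ℂ) : AEStronglyMeasurable (fun x => exp (z * g x)) μ :=
    continuous_exp.comp_aestronglyMeasurable (hg.const_mul z)
  have hbound (x : α) (z : ℂ) (hz : z ∈ Metric.ball z₀ (ε / 2)) :
      ‖f x * (exp (z * g x) * g x)‖ ≤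
        2 / ε * ‖f x * exp (z₀ * g x) * Real.exp (ε * ‖g x‖)‖ := by
    have hshift : ‖exp ((z - z₀) * g x)‖ ≤ Real.exp (ε / 2 * ‖g x‖) := by
      refine (norm_exp_le_exp_norm _).trans (Real.exp_le_exp.2 ?_)
      rw [norm_mul]
      gcongr
      exact (mem_ball_iff_norm.1 hz).le
    have hlinear : ‖g x‖ ≤ 2 / ε * Real.exp (ε / 2 * ‖g x‖) := by
      rw [div_mul_eq_mul_div, le_div_iff₀ hε]
      linarith [Real.add_one_le_exp (ε / 2 * ‖g x‖)]
    calc ‖f x * (exp (z * g x) * g x)‖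
        = ‖f x * exp (z₀ * g x)‖ * (‖exp ((z - z₀) * g x)‖ * ‖g x‖) := by
          rw [← norm_mul, ← norm_mul, mul_assoc (f x), ← mul_assoc (exp _) (exp _), ← exp_add]
          ring_nf
      _ ≤ ‖f x * exp (z₀ * g x)‖ *
            (Real.exp (ε / 2 * ‖g x‖) * (2 / ε * Real.exp (ε / 2 * ‖g x‖))) := by gcongr
      _ = 2 / ε * (‖f x * exp (z₀ * g x)‖ * Real.exp (ε * ‖g x‖)) := by
          rw [mul_left_comm (Real.exp _), ← Real.exp_add]
          ring_nf
      _ = _ := by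
          rw [norm_mul _ (Real.exp _ : ℂ), norm_real, Real.norm_of_nonneg (Real.exp_nonneg _)]
  have hint : Integrable (fun x => f x * exp (z₀ * g x)) μ := by
    refine hfg.mono (hf.mul (hmeas z₀)) (.of_forall fun x => ?_)
    rw [norm_mul _ (Real.exp _ : ℂ), norm_real, Real.norm_of_nonneg (Real.exp_nonneg _)]
    exact le_mul_of_one_le_right (norm_nonneg _) (Real.one_le_exp (by positivity))
  exact (hasDerivAt_integral_of_dominated_loc_of_deriv_le
    (Metric.ball_mem_nhds z₀ (half_pos hε)) (.of_forall fun z => hf.mul (hmeas z)) hint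
    (hf.mul ((hmeas z₀).mul hg)) (.of_forall hbound) (hfg.norm.const_mul _)
    (.of_forall fun x z _ => ((hasDerivAt_mul_const (g x)).cexp).const_mul (f x))).2

theorem integrableOn_cpow_mul_cexp_neg_mul_Ioi {a r : ℂ} (ha : 0 < a.re) (hr : 0 < r.re) :
    IntegrableOn (fun x : ℝ => (x : ℂ) ^ (a - 1) * exp (-(r * x))) (Ioi 0) := by
  have hreal := integrableOn_rpow_mul_exp_neg_mul_rpow (p := 1) (s := a.re - 1) (by linarith)
    one_pos hr
  refine hreal.mono' (Measurable.aestronglyMeasurable (by fun_prop)) ?_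
  filter_upwards [ae_restrict_mem measurableSet_Ioi] with x hx
  rw [norm_mul, norm_cpow_eq_rpow_re_of_pos hx, norm_exp]
  simp

theorem differentiableOn_integral_cpow_mul_cexp_neg_mul_Ioi {a : ℂ} (ha : 0 < a.re) :
    DifferentiableOn ℂ (fun r : ℂ => ∫ x : ℝ in Ioi 0, (x : ℂ) ^ (a - 1) * exp (-(r * x)))
      {r | 0 < r.re} := by
  intro r hr
  have hint : IntegrableOn (fun x : ℝ => (x : ℂ) ^ (a - 1) * exp (r * -x) *
      Real.exp (r.re / 2 * ‖-(x : ℂ)‖)) (Ioi 0) := by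
    have hhalf : 0 < (r - r.re / 2 : ℂ).re := by
      simpa using hr
    refine (integrableOn_cpow_mul_cexp_neg_mul_Ioi ha hhalf).congr_fun (fun x hx => ?_)
      measurableSet_Ioi
    dsimp only
    rw [norm_neg, norm_real, Real.norm_of_nonneg (le_of_lt hx), mul_assoc, ofReal_exp, ← exp_add]
    push_cast
    ring_nf
  have hderiv := hasDerivAt_integral_mul_cexp (half_pos hr)
    (Measurable.aestronglyMeasurable (by fun_prop)) (by fun_prop) hint
  simp only [mul_neg] at hderiv
  exact hderiv.differentiableAt.differentiableWithinAt

theorem integral_cpow_mul_cexp_neg_mul_Ioi {a r : ℂ} (ha : 0 < a.re) (hr : 0 < r.re) :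
    ∫ x : ℝ in Ioi 0, (x : ℂ) ^ (a - 1) * exp (-(r * x)) = r ^ (-a) * Gamma a := by
  have hopen : IsOpen {r : ℂ | 0 < r.re} := isOpen_lt continuous_const continuous_re
  have hpow : DifferentiableOn ℂ (fun r : ℂ => r ^ (-a) * Gamma a) {r | 0 < r.re} :=
    fun r hr => ((differentiableAt_id.cpow_const (.inl hr)).mul_const _).differentiableWithinAt
  have hreal : ∀ᶠ r : ℝ in 𝓝[≠] 1,
      ∫ x : ℝ in Ioi 0, (x : ℂ) ^ (a - 1) * exp (-((r : ℂ) * x)) = (r : ℂ) ^ (-a) * Gamma a := by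
    filter_upwards [nhdsWithin_le_nhds (lt_mem_nhds one_pos)] with r hr
    rw [integral_cpow_mul_exp_neg_mul_Ioi ha hr, cpow_neg, one_div, inv_cpow]
    simp [arg_ofReal_of_nonneg hr.le, Real.pi_ne_zero.symm]
  have hofReal : Tendsto ((↑) : ℝ → ℂ) (𝓝[≠] 1) (𝓝[≠] 1) := by
    simpa using (hasDerivAt_id (1 : ℝ)).ofReal_comp.tendsto_nhdsNE one_ne_zero
  exact ((differentiableOn_integral_cpow_mul_cexp_neg_mul_Ioi ha).analyticOnNhd hopen
    |>.eqOn_of_preconnected_of_frequently_eq (hpow.analyticOnNhd hopen)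
      (convex_halfSpace_re_gt 0).isPreconnected (by simp : (1 : ℂ) ∈ _)
      (hofReal.frequently hreal.frequently)) hr

theorem integral_cpow_mul_cexp_neg_mul_sq_Ioi {a b : ℂ} (ha : 0 < a.re) (hb : 0 < b.re) :
    ∫ x : ℝ in Ioi 0, (x : ℂ) ^ (a - 1) * exp (-(b * x ^ 2)) =
      2⁻¹ * (b ^ (-(a / 2)) * Gamma (a / 2)) := by
  have hsubst := mellin_comp_rpow (fun x : ℝ => exp (-(b * x))) a 2
  have hgamma := integral_cpow_mul_cexp_neg_mul_Ioi (a := a / 2) (by simpa using ha) hb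
  simpa [mellin, hgamma] using hsubst

theorem neg_I_mul_cpow {w : ℂ} (hw : 0 < w.im) (s : ℂ) :
    (-I * w) ^ s = exp (-(π / 2 * I * s)) * w ^ s := by
  have hw0 : w ≠ 0 := fun h => by simp [h] at hw
  have harg : arg (-I) + arg w ∈ Ioc (-π) π := by
    rw [arg_neg_I]
    constructor <;> linarith [arg_nonneg_iff.2 hw.le, arg_le_pi w, Real.pi_pos]
  rw [cpow_def_of_ne_zero (by simp [hw0]), cpow_def_of_ne_zero hw0,
    (log_mul_eq_add_log_iff (by simp) hw0).2 harg, log_neg_I, ← exp_add]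
  ring_nf

theorem neg_cpow_of_im_pos {w : ℂ} (hw : 0 < w.im) (s : ℂ) :
    (-w) ^ s = exp (-(π * I * s)) * w ^ s := by
  have hw0 : w ≠ 0 := fun h => by simp [h] at hw
  have hlog : log (-w) = log w - π * I := by
    rw [log, log, norm_neg, arg_neg_eq_arg_sub_pi_of_im_pos hw]
    push_cast
    ring
  rw [cpow_def_of_ne_zero (neg_ne_zero.2 hw0), cpow_def_of_ne_zero hw0, hlog, ← exp_add]
  ring_nf

theorem norm_log_le_norm_add_inv_add_pi {w : ℂ} (hw : w ≠ 0) :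
    ‖log w‖ ≤ ‖w‖ + ‖w‖⁻¹ + π := by
  have hpos : 0 < ‖w‖ := norm_pos_iff.2 hw
  have hlog : |Real.log ‖w‖| ≤ ‖w‖ + ‖w‖⁻¹ := by
    rw [abs_le]
    constructor <;> linarith [Real.log_le_sub_one_of_pos hpos,
      Real.one_sub_inv_le_log_of_pos hpos, inv_pos.2 hpos]
  calc ‖log w‖ ≤ |Real.log ‖w‖| + |arg w| := by
        simpa only [log_re, log_im] using norm_le_abs_re_add_abs_im (log w)
    _ ≤ ‖w‖ + ‖w‖⁻¹ + π := add_le_add hlog (abs_arg_le_pi w)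

/-- The weight of the contour integral defining the parabolic cylinder functions, with
`s = a - 1 / 2`. -/
noncomputable def pcWeight (s w : ℂ) : ℂ := w ^ s * exp (-(w ^ 2 / 2))

theorem hasDerivAt_pcWeight (s : ℂ) {w : ℂ} (hw : w ∈ slitPlane) :
    HasDerivAt (pcWeight s) (s * pcWeight (s - 1) w - pcWeight (s + 1) w) w := by
  have hgauss : HasDerivAt (fun w : ℂ => exp (-(w ^ 2 / 2))) (exp (-(w ^ 2 / 2)) * -w) w := by
    simpa using (((hasDerivAt_pow 2 w).div_const 2).neg).cexp
  refine (((hasDerivAt_id' w).cpow_const hw).mul hgauss).congr_deriv ?_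
  rw [pcWeight, pcWeight, cpow_add _ _ (slitPlane_ne_zero hw), cpow_one]
  ring

theorem pcWeight_add_one (s : ℂ) {w : ℂ} (hw : w ≠ 0) : pcWeight (s + 1) w = w * pcWeight s w := by
  simp only [pcWeight, cpow_add _ _ hw, cpow_one]
  ring

theorem norm_pcWeight_le (s : ℂ) {w : ℂ} (hw : w ≠ 0) :
    ‖pcWeight s w‖ ≤ Real.exp
      (‖s‖ * (‖w‖ + ‖w‖⁻¹ + π) + (w.im ^ 2 - w.re ^ 2) / 2) := by
  have hpow : ‖w ^ s‖ ≤ Real.exp (‖s‖ * (‖w‖ + ‖w‖⁻¹ + π)) := by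
    rw [cpow_def_of_ne_zero hw, mul_comm]
    refine (norm_exp_le_exp_norm _).trans (Real.exp_le_exp.2 ?_)
    rw [norm_mul]
    gcongr
    exact norm_log_le_norm_add_inv_add_pi hw
  have hgauss : ‖exp (-(w ^ 2 / 2))‖ = Real.exp ((w.im ^ 2 - w.re ^ 2) / 2) := by
    rw [norm_exp]
    congr 1
    simp [sq]
    ring
  rw [pcWeight, norm_mul, hgauss, Real.exp_add]
  gcongr

theorem integrable_rexp_mul_abs_sub_sq_div_two (B : ℝ) :
    Integrable fun t : ℝ => Real.exp (B * |t| - t ^ 2 / 2) := by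
  have hgauss : Integrable fun t : ℝ => Real.exp (B ^ 2) * Real.exp (-(1 / 4) * t ^ 2) :=
    (integrable_exp_neg_mul_sq (by norm_num)).const_mul _
  refine hgauss.mono' (Continuous.aestronglyMeasurable (by fun_prop)) (.of_forall fun t => ?_)
  rw [Real.norm_of_nonneg (Real.exp_nonneg _), ← Real.exp_add, Real.exp_le_exp]
  nlinarith [sq_nonneg (|t| / 2 - B), sq_abs t]

section HorizontalLine

variable {σ : ℝ}

theorem add_mul_I_mem_slitPlane (hσ : σ ≠ 0) (t : ℝ) : (t + σ * I : ℂ) ∈ slitPlane :=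
  .inr (by simpa using hσ)

theorem continuous_pcWeight_line (hσ : σ ≠ 0) (s : ℂ) :
    Continuous fun t : ℝ => pcWeight s (t + σ * I) :=
  continuous_iff_continuousAt.2 fun t =>
    (hasDerivAt_pcWeight s (add_mul_I_mem_slitPlane hσ t)).continuousAt.comp
      (f := fun t : ℝ => (t + σ * I : ℂ)) (by fun_prop)

theorem integrable_pcWeight_mul_cexp_mul_rexp (hσ : σ ≠ 0) (s z : ℂ) (k : ℝ) :
    Integrable fun t : ℝ => pcWeight s (t + σ * I) * exp (z * (t + σ * I)) *
      Real.exp (k * ‖(t + σ * I : ℂ)‖) := by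
  set B := ‖s‖ + ‖z‖ + |k| with hB
  set A := ‖s‖ * (|σ|⁻¹ + π) + σ ^ 2 / 2 + B * |σ| with hA
  have hcont := continuous_pcWeight_line hσ s
  refine ((integrable_rexp_mul_abs_sub_sq_div_two B).const_mul (Real.exp A)).mono'
    (Continuous.aestronglyMeasurable (by fun_prop)) (.of_forall fun t => ?_)
  set w : ℂ := t + σ * I with hw
  have hre : w.re = t := by simp [hw]
  have him : w.im = σ := by simp [hw]
  have hnorm : ‖w‖ ≤ |t| + |σ| := by simpa [hre, him] using norm_le_abs_re_add_abs_im w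
  have hinv : ‖w‖⁻¹ ≤ |σ|⁻¹ := inv_anti₀ (abs_pos.2 hσ) (by simpa [him] using abs_im_le_norm w)
  have hweight := norm_pcWeight_le s (w := w)
    (slitPlane_ne_zero (add_mul_I_mem_slitPlane hσ t))
  rw [hre, him] at hweight
  have hexp : ‖exp (z * w)‖ ≤ Real.exp (‖z‖ * ‖w‖) :=
    (norm_exp_le_exp_norm _).trans_eq (by rw [norm_mul])
  calc ‖pcWeight s w * exp (z * w) * Real.exp (k * ‖w‖)‖
      ≤ Real.exp (‖s‖ * (‖w‖ + ‖w‖⁻¹ + π) + (σ ^ 2 - t ^ 2) / 2) *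
          Real.exp (‖z‖ * ‖w‖) * Real.exp (|k| * ‖w‖) := by
        rw [norm_mul, norm_mul, norm_real, Real.norm_of_nonneg (Real.exp_nonneg _)]
        gcongr
        exact le_abs_self k
    _ = Real.exp (‖s‖ * (‖w‖⁻¹ + π) + (σ ^ 2 - t ^ 2) / 2 + B * ‖w‖) := by
        rw [← Real.exp_add, ← Real.exp_add, hB]
        ring_nf
    _ ≤ Real.exp (‖s‖ * (|σ|⁻¹ + π) + (σ ^ 2 - t ^ 2) / 2 + B * (|t| + |σ|)) := by gcongr
    _ = Real.exp A * Real.exp (B * |t| - t ^ 2 / 2) := by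
        rw [← Real.exp_add, hA]
        ring_nf

theorem integrable_pcWeight_mul_cexp (hσ : σ ≠ 0) (s z : ℂ) :
    Integrable fun t : ℝ => pcWeight s (t + σ * I) * exp (z * (t + σ * I)) := by
  simpa using integrable_pcWeight_mul_cexp_mul_rexp hσ s z 0

/-- The contour integral of `w ^ s * exp (z * w - w ^ 2 / 2)` over the line `Im w = σ`: the
parabolic cylinder function `Upc σ (s + 1 / 2) z` without its factor `exp (-z ^ 2 / 4)`. -/
noncomputable def pcIntegral (σ : ℝ) (s z : ℂ) : ℂ :=
  ∫ t : ℝ, pcWeight s (t + σ * I) * exp (z * (t + σ * I))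

theorem Upc_eq_cexp_mul_pcIntegral (hσ : σ ≠ 0) (a z : ℂ) :
    Upc σ a z = exp (-z ^ 2 / 4) * pcIntegral σ (a - 1 / 2) z := by
  rw [Upc, pcIntegral]
  congr 2 with t
  rw [pcWeight, cpow_def_of_ne_zero (slitPlane_ne_zero (add_mul_I_mem_slitPlane hσ t)),
    sub_eq_add_neg, exp_add]
  ring_nf

theorem hasDerivAt_pcIntegral (hσ : σ ≠ 0) (s z : ℂ) :
    HasDerivAt (pcIntegral σ s) (pcIntegral σ (s + 1) z) z := by
  have hderiv := hasDerivAt_integral_mul_cexp one_pos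
    (continuous_pcWeight_line hσ s).aestronglyMeasurable (by fun_prop)
    (integrable_pcWeight_mul_cexp_mul_rexp hσ s z 1)
  refine hderiv.congr_deriv (integral_congr_ae (.of_forall fun t => ?_))
  dsimp only
  rw [pcWeight_add_one s (slitPlane_ne_zero (add_mul_I_mem_slitPlane hσ t))]
  ring

theorem pcIntegral_add_one (hσ : σ ≠ 0) (s z : ℂ) :
    pcIntegral σ (s + 1) z = z * pcIntegral σ s z + s * pcIntegral σ (s - 1) z := by
  have hderiv (t : ℝ) :
      HasDerivAt (fun t : ℝ => pcWeight s (t + σ * I) * exp (z * (t + σ * I)))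
        (s * (pcWeight (s - 1) (t + σ * I) * exp (z * (t + σ * I))) -
          pcWeight (s + 1) (t + σ * I) * exp (z * (t + σ * I)) +
          z * (pcWeight s (t + σ * I) * exp (z * (t + σ * I)))) t := by
    have hline : HasDerivAt (fun t : ℝ => (t + σ * I : ℂ)) 1 t :=
      (hasDerivAt_id t).ofReal_comp.add_const _
    have hintegrand := (hasDerivAt_pcWeight s (add_mul_I_mem_slitPlane hσ t)).mul
      ((hasDerivAt_id' (t + σ * I : ℂ)).const_mul z).cexp
    refine (hintegrand.comp t hline).congr_deriv ?_
    ring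
  have hint (s : ℂ) := integrable_pcWeight_mul_cexp hσ s z
  have hlower := (hint (s - 1)).const_mul s
  have hmiddle := (hint s).const_mul z
  have hdiff : Integrable fun t : ℝ => s * (pcWeight (s - 1) (t + σ * I) *
      exp (z * (t + σ * I))) - pcWeight (s + 1) (t + σ * I) * exp (z * (t + σ * I)) :=
    hlower.sub (hint (s + 1))
  have hzero := integral_eq_zero_of_hasDerivAt_of_integrable hderiv
    (hdiff.add hmiddle) (hint s)
  rw [integral_add hdiff hmiddle, integral_sub hlower (hint (s + 1)),
    integral_const_mul, integral_const_mul] at hzero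
  simp only [pcIntegral]
  linear_combination -hzero

theorem pcIntegral_neg_left (hσ : 0 < σ) (s z : ℂ) :
    pcIntegral (-σ) s z = exp (-(π * I * s)) * pcIntegral σ s (-z) := by
  rw [pcIntegral, pcIntegral, ← integral_neg_eq_self, ← integral_const_mul]
  refine integral_congr_ae (.of_forall fun t => ?_)
  dsimp only
  have hneg : ((-t : ℝ) + (-σ : ℝ) * I : ℂ) = -(t + σ * I) := by
    push_cast
    ring
  rw [hneg, pcWeight, pcWeight, neg_cpow_of_im_pos (by simpa using hσ)]
  ring_nf

theorem integral_cexp_neg_sq_div_two_mul_cexp_line (σ : ℝ) (u : ℂ) :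
    ∫ t : ℝ, exp (-((t + σ * I) ^ 2 / 2)) * exp (u * (t + σ * I)) =
      (2 * π) ^ (1 / 2 : ℂ) * exp (u ^ 2 / 2) := by
  have hgauss := integral_cexp_quadratic (b := -(1 / 2)) (by norm_num)
    (u - σ * I) (u * (σ * I) - (σ * I) ^ 2 / 2)
  convert hgauss using 2
  · ext t
    rw [← exp_add]
    ring_nf
  · ring_nf
  · ring_nf

theorem integrable_prod_cpow_mul_cexp (hσ : 0 < σ) {s : ℂ} (hs : s.re < 0) (z : ℂ) :
    Integrable (fun p : ℝ × ℝ => exp (-((p.1 + σ * I) ^ 2 / 2)) * exp (z * (p.1 + σ * I)) *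
      ((p.2 : ℂ) ^ (-s - 1) * exp (p.2 * I * (p.1 + σ * I))))
      (volume.prod (volume.restrict (Ioi 0))) := by
  have hline : Integrable fun t : ℝ => exp (-((t + σ * I) ^ 2 / 2)) * exp (z * (t + σ * I)) := by
    simpa [pcWeight] using integrable_pcWeight_mul_cexp hσ.ne' 0 z
  have hgamma : IntegrableOn (fun x : ℝ => (x : ℂ) ^ (-s - 1) * exp (-(σ * x))) (Ioi 0) :=
    integrableOn_cpow_mul_cexp_neg_mul_Ioi (by simpa using hs) (by simpa using hσ)
  have hphase : ∀ p : ℝ × ℝ, ‖exp ((p.1 * p.2 : ℝ) * I)‖ ≤ 1 := fun p =>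
    (norm_exp_ofReal_mul_I _).le
  refine ((hline.mul_prod hgamma).mul_bdd (Continuous.aestronglyMeasurable (by fun_prop))
    (.of_forall hphase)).congr (.of_forall fun p => ?_)
  have hexp : exp (p.2 * I * (p.1 + σ * I)) =
      exp (-(σ * p.2)) * exp ((p.1 * p.2 : ℝ) * I) := by
    rw [← exp_add]
    congr 1
    push_cast
    linear_combination (σ * p.2 : ℂ) * I_sq
  dsimp only
  rw [hexp]
  ring

theorem Gamma_mul_pcWeight {s w : ℂ} (hs : s.re < 0) (hw : 0 < w.im) :
    Gamma (-s) * pcWeight s w = exp (π / 2 * I * s) *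
      (exp (-(w ^ 2 / 2)) * ∫ x : ℝ in Ioi 0, (x : ℂ) ^ (-s - 1) * exp (x * I * w)) := by
  have hgamma := integral_cpow_mul_cexp_neg_mul_Ioi (a := -s) (r := -I * w)
    (by simpa using hs) (by simpa using hw)
  rw [neg_neg, neg_I_mul_cpow hw, exp_neg] at hgamma
  have hint : ∫ x : ℝ in Ioi 0, (x : ℂ) ^ (-s - 1) * exp (x * I * w) =
      (exp (π / 2 * I * s))⁻¹ * w ^ s * Gamma (-s) := by
    rw [← hgamma]
    congr! 4
    ring
  rw [hint, pcWeight]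
  field_simp [exp_ne_zero]

theorem Gamma_mul_pcIntegral (hσ : 0 < σ) {s : ℂ} (hs : s.re < 0) (z : ℂ) :
    Gamma (-s) * pcIntegral σ s z = exp (π / 2 * I * s) * (2 * π) ^ (1 / 2 : ℂ) *
      ∫ x : ℝ in Ioi 0, (x : ℂ) ^ (-s - 1) * exp ((z + x * I) ^ 2 / 2) := by
  calc Gamma (-s) * pcIntegral σ s z
      = exp (π / 2 * I * s) * ∫ t : ℝ, ∫ x : ℝ in Ioi 0,
          exp (-((t + σ * I) ^ 2 / 2)) * exp (z * (t + σ * I)) *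
            ((x : ℂ) ^ (-s - 1) * exp (x * I * (t + σ * I))) := by
        rw [pcIntegral, ← integral_const_mul, ← integral_const_mul]
        congr! 2 with t
        rw [← mul_assoc, Gamma_mul_pcWeight hs (by simpa using hσ), integral_const_mul]
        ring
    _ = exp (π / 2 * I * s) * ∫ x : ℝ in Ioi 0, ∫ t : ℝ,
          exp (-((t + σ * I) ^ 2 / 2)) * exp (z * (t + σ * I)) *
            ((x : ℂ) ^ (-s - 1) * exp (x * I * (t + σ * I))) := by
        rw [integral_integral_swap (integrable_prod_cpow_mul_cexp hσ hs z)]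
    _ = exp (π / 2 * I * s) * ∫ x : ℝ in Ioi 0,
          (2 * π) ^ (1 / 2 : ℂ) * ((x : ℂ) ^ (-s - 1) * exp ((z + x * I) ^ 2 / 2)) := by
        congr! 3 with x
        rw [mul_left_comm, ← integral_cexp_neg_sq_div_two_mul_cexp_line σ, ← integral_const_mul]
        congr! 2 with _
        rw [add_mul, exp_add]
        ring
    _ = _ := by rw [integral_const_mul, ← mul_assoc]

theorem pcIntegral_zero_right_ne_zero_of_re_neg (hσ : 0 < σ) {s : ℂ} (hs : s.re < 0) :
    pcIntegral σ s 0 ≠ 0 := by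
  have hs' : 0 < (-s).re := by simpa using hs
  have hint : ∫ x : ℝ in Ioi 0, (x : ℂ) ^ (-s - 1) * exp ((0 + x * I) ^ 2 / 2) =
      2⁻¹ * ((1 / 2) ^ (-(-s / 2)) * Gamma (-s / 2)) := by
    rw [← integral_cpow_mul_cexp_neg_mul_sq_Ioi hs' (by norm_num)]
    congr! 4 with x
    rw [zero_add, mul_pow, I_sq]
    ring
  refine right_ne_zero_of_mul (a := Gamma (-s)) ?_
  rw [Gamma_mul_pcIntegral hσ hs, hint]
  have hgamma : Gamma (-s / 2) ≠ 0 := Gamma_ne_zero_of_re_pos (by simpa using hs)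
  have hpi : (π : ℂ) ≠ 0 := ofReal_ne_zero.2 Real.pi_ne_zero
  simp [hgamma, hpi, cpow_eq_zero_iff]

theorem pcIntegral_zero_right_ne_zero (hσ : 0 < σ) {s : ℂ} (hs : ∀ n : ℕ, s ≠ 2 * n + 1) :
    pcIntegral σ s 0 ≠ 0 := by
  obtain ⟨k, hk⟩ := exists_nat_gt (s.re / 2)
  induction k generalizing s with
  | zero =>
    exact pcIntegral_zero_right_ne_zero_of_re_neg hσ (by simpa using (div_lt_iff₀ two_pos).1 hk)
  | succ k ih =>
    have hrec := pcIntegral_add_one hσ.ne' (s - 1) 0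
    have hlower : pcIntegral σ (s - 2) 0 ≠ 0 := by
      refine ih (fun n hn => hs (n + 1) ?_) ?_
      · push_cast
        linear_combination hn
      · simp only [sub_re, re_ofNat]
        push_cast at hk
        linarith
    have hs1 : s - 1 ≠ 0 := fun h => hs 0 (by simpa [sub_eq_zero] using h)
    rw [sub_add_cancel, zero_mul, zero_add, sub_sub, one_add_one_eq_two] at hrec
    rw [hrec]
    exact mul_ne_zero hs1 hlower

theorem Upc_linearly_independent_general (hσ : 0 < σ) {a : ℂ} (ha : ∀ n : ℕ, a ≠ n + 1 / 2)
    {c₁ c₂ : ℂ} (h : ∀ᶠ z in 𝓝 0, c₁ * Upc σ a z + c₂ * Upc (-σ) a z = 0) :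
    c₁ = 0 ∧ c₂ = 0 := by
  set s := a - 1 / 2 with hs
  have hs_ne (n : ℕ) : s ≠ n := fun hn => ha n (by rw [← hn, hs]; ring)
  set d := c₂ * exp (-(π * I * s))
  have hcomb : (fun z => c₁ * pcIntegral σ s z + d * pcIntegral σ s (-z)) =ᶠ[𝓝 0] 0 := by
    filter_upwards [h] with z hz
    rw [Upc_eq_cexp_mul_pcIntegral hσ.ne', Upc_eq_cexp_mul_pcIntegral (neg_ne_zero.2 hσ.ne'),
      pcIntegral_neg_left hσ, ← hs] at hz
    refine (mul_eq_zero.1 ?_).resolve_left (exp_ne_zero (-z ^ 2 / 4))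
    linear_combination hz
  obtain ⟨hc₁, hd0⟩ := eq_zero_of_mul_add_mul_comp_neg_eventuallyEq_zero
    (hasDerivAt_pcIntegral hσ.ne' s 0)
    (pcIntegral_zero_right_ne_zero hσ fun n hn => hs_ne (2 * n + 1) (by exact_mod_cast hn))
    (pcIntegral_zero_right_ne_zero hσ fun n hn =>
      hs_ne (2 * n) (by push_cast; linear_combination hn)) hcomb
  exact ⟨hc₁, (mul_eq_zero.1 hd0).resolve_right (exp_ne_zero _)⟩

end HorizontalLine

/-- For a − 1/2 not a nonnegative integer, the parabolic cylinder functions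
U_a^+ and U_a^− are linearly independent over ℂ. -/
theorem Upc_linearly_independent (a : ℂ) (ha : ∀ n : ℕ, a ≠ (n : ℂ) + 1/2)
    (c₁ c₂ : ℂ) (h : ∀ z : ℂ, c₁ * Upc 1 a z + c₂ * Upc (-1) a z = 0) :
    c₁ = 0 ∧ c₂ = 0 :=
  Upc_linearly_independent_general one_pos ha (.of_forall h)
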